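/- Let 0 < q < 1, let A := f(-q)f(-q^2)/(q^{1/2} f(-q^5) f(-q^10)) and B_4 := f(-q^4)f(-q^8)/(q^2 f(-q^20) f(-q^40)), and set P := A·B_4 and Q := A/B_4. Then (Q^8 + 1/Q^8) - 52(Q^6 + 1/Q^6) - 1024(Q^4 + 1/Q^4) - 3987(Q^2 + 1/Q^2) - (P + 5^2/P)[1076(Q + 1/Q) + 384(Q^3 + 1/Q^3) + 35(Q^5 + 1/Q^5)] - (P^2 + 5^4/P^2)[92(Q^2 + 1/Q^2) + 8(Q^4 + 1/Q^4) + 149] - (P^3 + 5^6/P^3)[12(Q + 1/Q) + (Q^3 + 1/Q^3)] - (P^4 + 5^8/P^4) - 7676 = 0. -/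

import Mathlib

open Real

/-- Ramanujan's theta function `φ(q) = ∑_{n=-∞}^∞ q^(n^2)`. -/
noncomputable def phi (q : ℝ) : ℝ := ∑' n : ℤ, q ^ (n ^ 2)

/-- Ramanujan's theta function `ψ(q) = ∑_{n=0}^∞ q^(n(n+1)/2)`. -/
noncomputable def psi (q : ℝ) : ℝ := ∑' n : ℕ, q ^ (n * (n + 1) / 2)

/-- `fneg q` is Ramanujan's `f(-q) = ∑_{n=-∞}^∞ (-1)^n q^(n(3n-1)/2)`. -/
noncomputable def fneg (q : ℝ) : ℝ := ∑' n : ℤ, (-1 : ℝ) ^ n * q ^ (n * (3 * n - 1) / 2)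

open Filter Topology Finset

/-- The infinite product `∏_{k ≥ 0} (1 - a p^k)`. -/
noncomputable def qPoch (a p : ℝ) : ℝ := ∏' k : ℕ, (1 - a * p ^ k)

/-- The bilateral series `∑_n p^(n(n-1)/2) x^n`. -/
noncomputable def thetaSum (p x : ℝ) : ℝ := ∑' n : ℤ, p ^ (n * (n - 1) / 2) * x ^ n

section qPoch

variable {p : ℝ}

lemma multipliable_one_sub_mul_pow (a : ℝ) (hp0 : 0 ≤ p) (hp1 : p < 1) :
    Multipliable fun k : ℕ => 1 - a * p ^ k := by
  simp only [sub_eq_add_neg]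
  exact Real.multipliable_one_add_of_summable
    ((summable_geometric_of_lt_one hp0 hp1).mul_left a).neg

lemma tendsto_prod_qPoch (a : ℝ) (hp0 : 0 ≤ p) (hp1 : p < 1) :
    Tendsto (fun N => ∏ k ∈ range N, (1 - a * p ^ k)) atTop (𝓝 (qPoch a p)) :=
  (multipliable_one_sub_mul_pow a hp0 hp1).tendsto_prod_tprod_nat

lemma one_sub_mul_pow_pos {a : ℝ} (hp0 : 0 ≤ p) (hp1 : p < 1) (ha : a < 1) (k : ℕ) :
    0 < 1 - a * p ^ k := by
  have h1 : p ^ k ≤ 1 := pow_le_one₀ hp0 hp1.le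
  have h0 : 0 ≤ p ^ k := pow_nonneg hp0 k
  rcases le_total a 0 with h | h <;> nlinarith

lemma qPoch_pos {a : ℝ} (hp0 : 0 ≤ p) (hp1 : p < 1) (ha : a < 1) : 0 < qPoch a p := by
  have hnonneg : 0 ≤ qPoch a p :=
    ge_of_tendsto' (tendsto_prod_qPoch a hp0 hp1) fun N =>
      prod_nonneg fun k _ => (one_sub_mul_pow_pos hp0 hp1 ha k).le
  have hne : qPoch a p ≠ 0 := by
    unfold qPoch
    simp only [sub_eq_add_neg]
    refine tprod_one_add_ne_zero_of_summable (fun k => ?_) ?_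
    · have := one_sub_mul_pow_pos hp0 hp1 ha k
      rw [← sub_eq_add_neg]
      exact this.ne'
    · exact (((summable_geometric_of_lt_one hp0 hp1).mul_left a).neg).norm
  exact lt_of_le_of_ne hnonneg hne.symm

lemma prod_range_mul_eq (f : ℕ → ℝ) (m N : ℕ) :
    ∏ k ∈ range (m * N), f k = ∏ j ∈ range m, ∏ k ∈ range N, f (m * k + j) := by
  induction N with
  | zero => simp
  | succ N ih =>
    rw [Nat.mul_succ, prod_range_add, ih, ← prod_mul_distrib]
    exact prod_congr rfl fun j _ => (prod_range_succ _ _).symm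

/-- Splitting an infinite product along residue classes modulo `m`. -/
lemma qPoch_eq_prod_residues (a : ℝ) (hp0 : 0 ≤ p) (hp1 : p < 1) {m : ℕ} (hm : 0 < m) :
    qPoch a p = ∏ j ∈ range m, qPoch (a * p ^ j) (p ^ m) := by
  have h1 : Tendsto (fun N => ∏ k ∈ range (m * N), (1 - a * p ^ k)) atTop (𝓝 (qPoch a p)) :=
    (tendsto_prod_qPoch a hp0 hp1).comp (tendsto_id.const_mul_atTop' hm)
  refine tendsto_nhds_unique h1 ?_
  simp only [prod_range_mul_eq]
  refine tendsto_finsetProd _ fun j _ => ?_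
  refine (tendsto_prod_qPoch (a * p ^ j) (pow_nonneg hp0 m)
    (pow_lt_one₀ hp0 hp1 hm.ne')).congr fun N => prod_congr rfl fun k _ => ?_
  rw [pow_add, pow_mul]
  ring

lemma qPoch_mul_qPoch_neg (a : ℝ) (hp0 : 0 ≤ p) (hp1 : p < 1) :
    qPoch a p * qPoch (-a) p = qPoch (a ^ 2) (p ^ 2) := by
  refine tendsto_nhds_unique
    ((tendsto_prod_qPoch a hp0 hp1).mul (tendsto_prod_qPoch (-a) hp0 hp1)) ?_
  refine (tendsto_prod_qPoch (a ^ 2) (pow_nonneg hp0 2)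
    (pow_lt_one₀ hp0 hp1 two_ne_zero)).congr fun N => ?_
  rw [← prod_mul_distrib]
  refine prod_congr rfl fun k _ => ?_
  ring

end qPoch

section gauss

/-- Gaussian binomial coefficients, evaluated at a real number. -/
noncomputable def gaussBinom (p : ℝ) : ℕ → ℕ → ℝ
  | 0, 0 => 1
  | 0, _ + 1 => 0
  | _ + 1, 0 => 1
  | M + 1, j + 1 => gaussBinom p M j + p ^ (j + 1) * gaussBinom p M (j + 1)

lemma gaussBinom_zero_right (p : ℝ) (M : ℕ) : gaussBinom p M 0 = 1 := by
  cases M <;> simp [gaussBinom]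

lemma gaussBinom_eq_zero_of_lt (p : ℝ) {M j : ℕ} (h : M < j) : gaussBinom p M j = 0 := by
  induction M generalizing j with
  | zero =>
    obtain ⟨j, rfl⟩ := Nat.exists_eq_succ_of_ne_zero h.ne'
    simp [gaussBinom]
  | succ M ih =>
    obtain ⟨j, rfl⟩ := Nat.exists_eq_succ_of_ne_zero (Nat.ne_zero_of_lt h)
    simp [gaussBinom, ih (show M < j by omega), ih (show M < j + 1 by omega)]

/-- The `q`-binomial theorem. -/
lemma prod_one_add_mul_pow (p x : ℝ) (M : ℕ) :
    ∏ k ∈ range M, (1 + x * p ^ k) =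
      ∑ j ∈ range (M + 1), p ^ (j.choose 2) * gaussBinom p M j * x ^ j := by
  induction M generalizing x with
  | zero => simp [gaussBinom]
  | succ M ih =>
    have hprod : ∏ k ∈ range (M + 1), (1 + x * p ^ k) =
        (1 + x) * ∏ k ∈ range M, (1 + (x * p) * p ^ k) := by
      rw [prod_range_succ', mul_comm]
      congr 1
      · simp
      · exact prod_congr rfl fun k _ => by ring
    have hchoose (j : ℕ) : (j + 1).choose 2 = j.choose 2 + j := by
      rw [Nat.choose_succ_succ' j 1, Nat.choose_one_right, add_comm]
    have hone : ∑ j ∈ range (M + 1), p ^ (j.choose 2) * gaussBinom p M j * (x * p) ^ j =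
        1 + ∑ j ∈ range (M + 1),
          p ^ ((j + 1).choose 2) * gaussBinom p M (j + 1) * (x * p) ^ (j + 1) := by
      have h := sum_range_succ (fun j => p ^ (j.choose 2) * gaussBinom p M j * (x * p) ^ j) (M + 1)
      rw [sum_range_succ', gaussBinom_eq_zero_of_lt p (Nat.lt_succ_self M)] at h
      simp only [gaussBinom_zero_right] at h
      simp at h
      linarith
    rw [hprod, ih, add_mul, one_mul, mul_sum, hone, sum_range_succ' _ (M + 1),
      gaussBinom_zero_right, add_assoc, ← sum_add_distrib, add_comm]
    congr 1
    · refine sum_congr rfl fun j _ => ?_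
      rw [gaussBinom, hchoose, pow_add]
      ring
    · simp

/-- The finite product `∏_{k < n} (1 - p^(k+1))`. -/
noncomputable def eulerProd (p : ℝ) (n : ℕ) : ℝ := ∏ k ∈ range n, (1 - p * p ^ k)

lemma eulerProd_succ (p : ℝ) (n : ℕ) :
    eulerProd p (n + 1) = eulerProd p n * (1 - p ^ (n + 1)) := by
  rw [eulerProd, prod_range_succ, ← eulerProd, pow_succ']

lemma gaussBinom_add_mul (p : ℝ) (a b : ℕ) :
    gaussBinom p (a + b) a * (eulerProd p a * eulerProd p b) = eulerProd p (a + b) := by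
  induction h : a + b generalizing a b with
  | zero =>
    obtain ⟨rfl, rfl⟩ : a = 0 ∧ b = 0 := by omega
    simp [gaussBinom, eulerProd]
  | succ M ih =>
    rcases a with _ | a
    · obtain rfl : b = M + 1 := by omega
      simp [gaussBinom, eulerProd]
    have h1 := ih a b (by omega)
    have h2 : gaussBinom p M (a + 1) * (eulerProd p (a + 1) * eulerProd p b) =
        eulerProd p M * (1 - p ^ b) := by
      rcases b with _ | b
      · rw [gaussBinom_eq_zero_of_lt p (by omega)]
        simp
      · rw [eulerProd_succ p b, ← ih (a + 1) b (by omega)]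
        ring
    have h3 : p ^ (M + 1) = p ^ (a + 1) * p ^ b := by
      rw [← pow_add]
      congr 1
      omega
    rw [gaussBinom, eulerProd_succ p M, h3, add_mul, mul_assoc (p ^ (a + 1)), h2,
      eulerProd_succ p a]
    linear_combination (1 - p ^ (a + 1)) * h1

end gauss

section tripleProduct

variable {p x : ℝ}

lemma two_mul_triangular (n : ℤ) : 2 * (n * (n - 1) / 2) = n * (n - 1) :=
  Int.mul_ediv_cancel' (Int.even_mul_pred_self n).two_dvd

lemma two_mul_choose_two (n : ℕ) : 2 * ((n.choose 2 : ℕ) : ℤ) = n * (n - 1) := by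
  induction n with
  | zero => simp
  | succ n ih =>
    rw [Nat.choose_succ_succ' n 1, Nat.choose_one_right]
    push_cast
    linear_combination ih

lemma summable_triangular_nat (hp0 : 0 < p) (hp1 : p < 1) (hx : x ≠ 0) :
    Summable fun n : ℕ => p ^ (((n : ℤ) * ((n : ℤ) - 1)) / 2) * x ^ (n : ℤ) := by
  have hstep (n : ℕ) : p ^ ((((n + 1 : ℕ) : ℤ) * (((n + 1 : ℕ) : ℤ) - 1)) / 2) *
      x ^ ((n + 1 : ℕ) : ℤ) =
      (p ^ n * x) * (p ^ (((n : ℤ) * ((n : ℤ) - 1)) / 2) * x ^ (n : ℤ)) := by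
    have he : (((n + 1 : ℕ) : ℤ) * (((n + 1 : ℕ) : ℤ) - 1)) / 2 =
        n + ((n : ℤ) * ((n : ℤ) - 1)) / 2 := by
      have h1 := two_mul_triangular ((n + 1 : ℕ) : ℤ)
      have h2 := two_mul_triangular (n : ℤ)
      push_cast at h1 ⊢
      linarith
    rw [he, zpow_add₀ hp0.ne', Nat.cast_succ, zpow_add₀ hx, zpow_natCast, zpow_one]
    ring
  refine summable_of_ratio_test_tendsto_lt_one (l := 0) zero_lt_one ?_ ?_
  · exact Eventually.of_forall fun n => mul_ne_zero (zpow_ne_zero _ hp0.ne') (zpow_ne_zero _ hx)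
  · have hlim : Tendsto (fun n : ℕ => ‖p ^ n * x‖) atTop (𝓝 0) := by
      simpa using ((tendsto_pow_atTop_nhds_zero_of_lt_one hp0.le hp1).mul_const x).norm
    refine hlim.congr fun n => ?_
    rw [hstep, norm_mul (p ^ n * x), mul_div_assoc, div_self, mul_one]
    exact norm_ne_zero_iff.mpr (mul_ne_zero (zpow_ne_zero _ hp0.ne') (zpow_ne_zero _ hx))

lemma summable_thetaSum (hp0 : 0 < p) (hp1 : p < 1) (hx : x ≠ 0) :
    Summable fun n : ℤ => p ^ (n * (n - 1) / 2) * x ^ n := by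
  refine Summable.of_nat_of_neg (summable_triangular_nat hp0 hp1 hx) ?_
  refine (summable_triangular_nat hp0 hp1 (mul_ne_zero hp0.ne' (inv_ne_zero hx))).congr
    fun n => ?_
  have he : -(n : ℤ) * (-(n : ℤ) - 1) / 2 = ((n : ℤ) * ((n : ℤ) - 1)) / 2 + n := by
    have h1 := two_mul_triangular (-(n : ℤ))
    have h2 := two_mul_triangular (n : ℤ)
    linarith
  rw [he, zpow_add₀ hp0.ne', mul_zpow, zpow_neg, inv_zpow]
  ring

/-- The finite form of the Jacobi triple product. -/
lemma prod_mul_prod_eq_sum_gaussBinom (hp0 : 0 < p) (hx : x ≠ 0) (N : ℕ) :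
    (∏ k ∈ range N, (1 - (-x) * p ^ k)) * ∏ k ∈ range N, (1 - (-(x⁻¹ * p)) * p ^ k) =
      ∑ n ∈ Icc (-(N : ℤ)) N,
        gaussBinom p (2 * N) (N + n).toNat * (p ^ (n * (n - 1) / 2) * x ^ n) := by
  have hp : p ≠ 0 := hp0.ne'
  have hrefl : ∏ k ∈ range N, (1 + x * p⁻¹ ^ N * p ^ k) =
      (x ^ N * p⁻¹ ^ ((N + 1).choose 2)) * ∏ k ∈ range N, (1 - (-(x⁻¹ * p)) * p ^ k) := by
    have h1 : ∏ k ∈ range N, (1 + x * p⁻¹ ^ N * p ^ k) =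
        ∏ k ∈ range N, (1 + x * p⁻¹ ^ (k + 1)) := by
      rw [← prod_range_reflect]
      refine prod_congr rfl fun k hk => ?_
      have hk' := mem_range.mp hk
      obtain ⟨d, rfl⟩ : ∃ d, N = d + (k + 1) := ⟨N - (k + 1), by omega⟩
      rw [show d + (k + 1) - 1 - k = d by omega, pow_add p⁻¹ d, mul_assoc,
        mul_comm (p⁻¹ ^ d), mul_assoc, ← mul_pow, inv_mul_cancel₀ hp, one_pow, mul_one]
    rw [h1]
    clear h1
    induction N with
    | zero => simp
    | succ N ih =>
      rw [prod_range_succ, ih, prod_range_succ, Nat.choose_succ_succ' (N + 1) 1,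
        Nat.choose_one_right, pow_add p⁻¹ (N + 1), pow_succ x]
      have : 1 + x * p⁻¹ ^ (N + 1) = x * p⁻¹ ^ (N + 1) * (1 - -(x⁻¹ * p) * p ^ N) := by
        have hpp : p⁻¹ ^ (N + 1) * (p * p ^ N) = 1 := by
          rw [← pow_succ', ← mul_pow, inv_mul_cancel₀ hp, one_pow]
        linear_combination (-1 : ℝ) * hpp - p⁻¹ ^ (N + 1) * (p * p ^ N) * mul_inv_cancel₀ hx
      rw [this]
      ring
  have hrothe := prod_one_add_mul_pow p (x * p⁻¹ ^ N) (2 * N)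
  rw [two_mul, prod_range_add, hrefl] at hrothe
  have hsecond : ∏ k ∈ range N, (1 + x * p⁻¹ ^ N * p ^ (N + k)) =
      ∏ k ∈ range N, (1 - (-x) * p ^ k) := by
    refine prod_congr rfl fun k _ => ?_
    rw [pow_add, inv_pow]
    field_simp
    ring
  rw [hsecond, ← two_mul] at hrothe
  have hc : x ^ N * p⁻¹ ^ ((N + 1).choose 2) ≠ 0 :=
    mul_ne_zero (pow_ne_zero _ hx) (pow_ne_zero _ (inv_ne_zero hp))
  apply mul_left_cancel₀ hc
  rw [mul_left_comm, mul_comm, hrothe, mul_sum]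
  refine sum_bij' (fun j _ => (j : ℤ) - N) (fun n _ => (N + n).toNat) ?_ ?_ ?_ ?_ ?_
  · intro j hj
    rw [mem_range] at hj
    rw [mem_Icc]
    omega
  · intro n hn
    rw [mem_Icc] at hn
    rw [mem_range]
    omega
  · intro j _
    simp
  · intro n hn
    rw [mem_Icc] at hn
    omega
  · intro j _
    rw [show ((N : ℤ) + ((j : ℤ) - N)).toNat = j by omega]
    have he : ((j.choose 2 : ℕ) : ℤ) + -((N : ℤ) * j) =
        -(((N + 1).choose 2 : ℕ) : ℤ) + ((j : ℤ) - N) * ((j : ℤ) - N - 1) / 2 := by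
      have h1 := two_mul_choose_two j
      have h2 := two_mul_choose_two (N + 1)
      have h3 := two_mul_triangular ((j : ℤ) - N)
      push_cast at h2
      have : 2 * (((j.choose 2 : ℕ) : ℤ) + -((N : ℤ) * j)) =
          2 * (-(((N + 1).choose 2 : ℕ) : ℤ) + ((j : ℤ) - N) * ((j : ℤ) - N - 1) / 2) := by
        linear_combination h1 + h2 - h3
      linarith
    have hpow : p ^ (j.choose 2) * p⁻¹ ^ (N * j) =
        p⁻¹ ^ ((N + 1).choose 2) * p ^ (((j : ℤ) - N) * ((j : ℤ) - N - 1) / 2) := by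
      have h := congrArg (fun e : ℤ => p ^ e) he
      simp only [zpow_add₀ hp, zpow_neg] at h
      rw [inv_pow, inv_pow, ← zpow_natCast, ← zpow_natCast, ← zpow_natCast]
      push_cast
      exact h
    have hxj : x ^ j = x ^ N * x ^ ((j : ℤ) - N) := by
      rw [← zpow_natCast, ← zpow_natCast, ← zpow_add₀ hx]
      congr 1
      ring
    rw [mul_pow, ← pow_mul, hxj]
    linear_combination gaussBinom p (2 * N) j * x ^ N * x ^ ((j : ℤ) - N) * hpow

lemma eulerProd_pos (hp0 : 0 < p) (hp1 : p < 1) (n : ℕ) : 0 < eulerProd p n :=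
  prod_pos fun k _ => one_sub_mul_pow_pos hp0.le hp1 hp1 k

lemma eulerProd_le_one (hp0 : 0 < p) (hp1 : p < 1) (n : ℕ) : eulerProd p n ≤ 1 :=
  prod_le_one (fun k _ => (one_sub_mul_pow_pos hp0.le hp1 hp1 k).le) fun k _ => by
    have : 0 < p * p ^ k := by positivity
    linarith

lemma qPoch_le_eulerProd (hp0 : 0 < p) (hp1 : p < 1) (n : ℕ) : qPoch p p ≤ eulerProd p n := by
  have hanti : Antitone (eulerProd p) := antitone_nat_of_succ_le fun n => by
    rw [eulerProd_succ]
    have : 0 < p ^ (n + 1) := by positivity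
    nlinarith [eulerProd_pos hp0 hp1 n]
  exact hanti.le_of_tendsto (tendsto_prod_qPoch p hp0.le hp1) n

lemma gaussBinom_eq_div (hp0 : 0 < p) (hp1 : p < 1) {N : ℕ} {n : ℤ}
    (h : n ∈ Icc (-(N : ℤ)) N) :
    gaussBinom p (2 * N) (N + n).toNat =
      eulerProd p (2 * N) / (eulerProd p (N + n).toNat * eulerProd p (N - n).toNat) := by
  rw [mem_Icc] at h
  have hadd : (N + n).toNat + (N - n).toNat = 2 * N := by omega
  rw [eq_div_iff (mul_pos (eulerProd_pos hp0 hp1 _) (eulerProd_pos hp0 hp1 _)).ne', ← hadd]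
  exact gaussBinom_add_mul p _ _

/-- The **Jacobi triple product** identity. -/
theorem thetaSum_eq_qPoch (hp0 : 0 < p) (hp1 : p < 1) (hx : x ≠ 0) :
    thetaSum p x = qPoch p p * (qPoch (-x) p * qPoch (-(x⁻¹ * p)) p) := by
  have hE := qPoch_pos hp0.le hp1 hp1
  have hlhs := (tendsto_prod_qPoch (-x) hp0.le hp1).mul
    (tendsto_prod_qPoch (-(x⁻¹ * p)) hp0.le hp1)
  let F (N : ℕ) (n : ℤ) : ℝ := if n ∈ Icc (-(N : ℤ)) N then
    gaussBinom p (2 * N) (N + n).toNat * (p ^ (n * (n - 1) / 2) * x ^ n) else 0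
  have hF (N : ℕ) : (∏ k ∈ range N, (1 - (-x) * p ^ k)) *
      ∏ k ∈ range N, (1 - (-(x⁻¹ * p)) * p ^ k) = ∑' n, F N n := by
    rw [prod_mul_prod_eq_sum_gaussBinom hp0 hx, tsum_eq_sum (s := Icc (-(N : ℤ)) N)]
    · exact sum_congr rfl fun n hn => (if_pos hn).symm
    · exact fun n hn => if_neg hn
  simp only [hF] at hlhs
  have hlim : Tendsto (fun N => ∑' n, F N n) atTop
      (𝓝 (∑' n : ℤ, (qPoch p p)⁻¹ * (p ^ (n * (n - 1) / 2) * x ^ n))) := by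
    refine tendsto_tsum_of_dominated_convergence
      (bound := fun n : ℤ => ((qPoch p p)⁻¹ * (qPoch p p)⁻¹) * ‖p ^ (n * (n - 1) / 2) * x ^ n‖)
      ((summable_thetaSum hp0 hp1 hx).norm.mul_left _) (fun n => ?_)
      (Eventually.of_forall fun N n => ?_)
    · have hE' := tendsto_prod_qPoch p hp0.le hp1
      have hadd : Tendsto (fun N : ℕ => ((N : ℤ) + n).toNat) atTop atTop :=
        tendsto_atTop.mpr fun b => (eventually_ge_atTop (b + n.natAbs)).mono fun N hN => by omega
      have hsub : Tendsto (fun N : ℕ => ((N : ℤ) - n).toNat) atTop atTop :=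
        tendsto_atTop.mpr fun b => (eventually_ge_atTop (b + n.natAbs)).mono fun N hN => by omega
      have htwo : Tendsto (fun N : ℕ => 2 * N) atTop atTop :=
        tendsto_id.const_mul_atTop' two_pos
      have hlim : Tendsto (fun N : ℕ => eulerProd p (2 * N) /
          (eulerProd p ((N : ℤ) + n).toNat * eulerProd p ((N : ℤ) - n).toNat)) atTop
          (𝓝 (qPoch p p / (qPoch p p * qPoch p p))) :=
        (hE'.comp htwo).div ((hE'.comp hadd).mul (hE'.comp hsub)) (mul_pos hE hE).ne'
      rw [div_mul_cancel_left₀ hE.ne'] at hlim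
      refine (hlim.mul_const (p ^ (n * (n - 1) / 2) * x ^ n)).congr' ?_
      filter_upwards [eventually_ge_atTop n.natAbs] with N hN
      have hmem : n ∈ Icc (-(N : ℤ)) N := by
        rw [mem_Icc]
        omega
      simp only [F, if_pos hmem, gaussBinom_eq_div hp0 hp1 hmem]
    · by_cases hmem : n ∈ Icc (-(N : ℤ)) N
      · simp only [F, if_pos hmem, gaussBinom_eq_div hp0 hp1 hmem]
        rw [norm_mul]
        refine mul_le_mul_of_nonneg_right ?_ (norm_nonneg _)
        rw [Real.norm_of_nonneg (div_nonneg (eulerProd_pos hp0 hp1 _).le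
          (mul_pos (eulerProd_pos hp0 hp1 _) (eulerProd_pos hp0 hp1 _)).le), ← mul_inv,
          ← one_div]
        exact div_le_div₀ zero_le_one (eulerProd_le_one hp0 hp1 _) (mul_pos hE hE)
          (mul_le_mul (qPoch_le_eulerProd hp0 hp1 _) (qPoch_le_eulerProd hp0 hp1 _) hE.le
            (eulerProd_pos hp0 hp1 _).le)
      · simp only [F, if_neg hmem, norm_zero]
        positivity
  have h := tendsto_nhds_unique hlhs hlim
  rw [tsum_mul_left] at h
  rw [h, thetaSum, mul_inv_cancel_left₀ hE.ne']

end tripleProduct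

section lattice

lemma tsum_int_prod_eq_sum_classes (F : ℤ × ℤ → ℝ) (hF : Summable F) :
    ∑' z, F z = ∑ c : Fin 5, ∑' z : ℤ × ℤ, F (2 * z.1 + z.2 + (c : ℕ), z.1 - 2 * z.2) := by
  let g : Fin 5 × (ℤ × ℤ) → ℤ × ℤ :=
    fun w => (2 * w.2.1 + w.2.2 + ((w.1 : ℕ) : ℤ), w.2.1 - 2 * w.2.2)
  have hg : Function.Bijective g := by
    constructor
    · rintro ⟨c, u, v⟩ ⟨c', u', v'⟩ h
      simp only [g, Prod.mk.injEq] at h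
      have hc := c.isLt
      have hc' := c'.isLt
      refine Prod.ext (Fin.ext ?_) (Prod.ext ?_ ?_) <;> dsimp only <;> omega
    · rintro ⟨x, y⟩
      have hlt : ((x - 2 * y) % 5).toNat < 5 := by omega
      refine ⟨(⟨((x - 2 * y) % 5).toNat, hlt⟩,
        ((2 * (x - (x - 2 * y) % 5) + y) / 5, (x - (x - 2 * y) % 5 - 2 * y) / 5)), ?_⟩
      simp only [g, Prod.mk.injEq]
      omega
  let e := Equiv.ofBijective g hg
  have hsum : Summable fun w => F (e w) := e.summable_iff.mpr hF
  rw [← e.tsum_eq F, hsum.tsum_prod, tsum_fintype]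
  rfl

variable {r : ℝ}

lemma thetaTerm_eq (hr : r ≠ 0) (m k : ℕ) (n : ℤ) :
    (r ^ m) ^ (n * (n - 1) / 2) * (r ^ k) ^ n = r ^ (m * (n * (n - 1) / 2) + k * n) := by
  rw [zpow_add₀ hr, zpow_mul, zpow_mul, zpow_natCast, zpow_natCast]

lemma thetaTerm_mul_thetaTerm (hr : r ≠ 0) (m k l : ℕ) (z : ℤ × ℤ) :
    ((r ^ m) ^ (z.1 * (z.1 - 1) / 2) * (r ^ k) ^ z.1) *
      ((r ^ m) ^ (z.2 * (z.2 - 1) / 2) * (r ^ l) ^ z.2) =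
    r ^ (m * (z.1 * (z.1 - 1) / 2 + z.2 * (z.2 - 1) / 2) + k * z.1 + l * z.2) := by
  rw [thetaTerm_eq hr, thetaTerm_eq hr, ← zpow_add₀ hr]
  congr 1
  ring

lemma summable_thetaSum_mul (m k l : ℕ) (hr : r ≠ 0) (h0 : 0 < r ^ m) (h1 : r ^ m < 1) :
    Summable fun z : ℤ × ℤ =>
      r ^ (m * (z.1 * (z.1 - 1) / 2 + z.2 * (z.2 - 1) / 2) + k * z.1 + l * z.2) := by
  refine ((summable_thetaSum h0 h1 (pow_ne_zero k hr)).norm.mul_norm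
    (summable_thetaSum h0 h1 (pow_ne_zero l hr)).norm).of_norm.congr fun z => ?_
  exact thetaTerm_mul_thetaTerm hr m k l z

lemma thetaSum_mul_thetaSum (m k l : ℕ) (hr : r ≠ 0) (h0 : 0 < r ^ m) (h1 : r ^ m < 1) :
    thetaSum (r ^ m) (r ^ k) * thetaSum (r ^ m) (r ^ l) = ∑' z : ℤ × ℤ,
      r ^ (m * (z.1 * (z.1 - 1) / 2 + z.2 * (z.2 - 1) / 2) + k * z.1 + l * z.2) := by
  rw [thetaSum, thetaSum, tsum_mul_tsum_of_summable_norm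
    (summable_thetaSum h0 h1 (pow_ne_zero k hr)).norm
    (summable_thetaSum h0 h1 (pow_ne_zero l hr)).norm]
  exact tsum_congr fun z => thetaTerm_mul_thetaTerm hr m k l z

lemma tsum_zpow_eq_of_equiv (e : ℤ × ℤ ≃ ℤ × ℤ) (u v : ℤ → ℤ → ℤ)
    (he : ∀ a b, e (a, b) = (u a b, v a b)) {f g : ℤ × ℤ → ℤ}
    (h : ∀ a b, 2 * f (u a b, v a b) = 2 * g (a, b)) : ∑' z, r ^ f z = ∑' z, r ^ g z := by
  rw [← e.tsum_eq]
  refine tsum_congr fun z => congrArg _ ?_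
  rw [← Prod.mk.eta (p := z), he]
  linarith [h z.1 z.2]

/-- The quintic dissection of `φ(r)²`. -/
theorem thetaSum_sq_eq_add_four_mul (hr : r ≠ 0) (hlt : |r| < 1) :
    thetaSum (r ^ 2) (r ^ 1) * thetaSum (r ^ 2) (r ^ 1) =
      thetaSum (r ^ 10) (r ^ 5) * thetaSum (r ^ 10) (r ^ 5) +
        4 * r * (thetaSum (r ^ 10) (r ^ 9) * thetaSum (r ^ 10) (r ^ 7)) := by
  have hpos {m : ℕ} (hm : Even m) : 0 < r ^ m := hm.pow_pos hr
  have hone {m : ℕ} (hm : Even m) (hm0 : m ≠ 0) : r ^ m < 1 := by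
    rw [← hm.pow_abs]
    exact pow_lt_one₀ (abs_nonneg r) hlt hm0
  have h2 : Even 2 := by decide
  have h10 : Even 10 := by decide
  have hbase : r * (thetaSum (r ^ 10) (r ^ 9) * thetaSum (r ^ 10) (r ^ 7)) =
      ∑' z : ℤ × ℤ, r ^ (((10 : ℕ) : ℤ) * (z.1 * (z.1 - 1) / 2 + z.2 * (z.2 - 1) / 2) +
        ((9 : ℕ) : ℤ) * z.1 + ((7 : ℕ) : ℤ) * z.2 + 1) := by
    rw [thetaSum_mul_thetaSum 10 9 7 hr (hpos h10) (hone h10 (by decide)), ← tsum_mul_left]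
    exact tsum_congr fun z => by rw [zpow_add_one₀ hr, mul_comm]
  rw [thetaSum_mul_thetaSum 2 1 1 hr (hpos h2) (hone h2 (by decide)),
    thetaSum_mul_thetaSum 10 5 5 hr (hpos h10) (hone h10 (by decide)), mul_assoc, hbase,
    tsum_int_prod_eq_sum_classes _
      (summable_thetaSum_mul 2 1 1 hr (hpos h2) (hone h2 (by decide)))]
  simp only [Fin.sum_univ_five]
  have hadd {a b c d e Z S : ℝ} (ha : a = Z) (hb : b = S) (hc : c = S) (hd : d = S) (he : e = S) :
      a + b + c + d + e = Z + 4 * S := by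
    rw [ha, hb, hc, hd, he]
    ring
  refine hadd ?_ ?_ ?_ ?_ ?_
  · refine tsum_zpow_eq_of_equiv (Equiv.refl _)
      (fun a b => a) (fun a b => b) (fun _ _ => rfl) fun a b => ?_
    dsimp
    linear_combination 2 * two_mul_triangular (2 * a + b + 0) +
      2 * two_mul_triangular (a - 2 * b) -
      10 * two_mul_triangular a - 10 * two_mul_triangular b
  · refine tsum_zpow_eq_of_equiv (Equiv.refl _)
      (fun a b => a) (fun a b => b) (fun _ _ => rfl) fun a b => ?_
    dsimp
    linear_combination 2 * two_mul_triangular (2 * a + b + 1) +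
      2 * two_mul_triangular (a - 2 * b) -
      10 * two_mul_triangular a - 10 * two_mul_triangular b
  · refine tsum_zpow_eq_of_equiv
      ((Equiv.prodComm ℤ ℤ).trans ((Equiv.subLeft (-1)).prodCongr (Equiv.refl ℤ)))
      (fun a b => -1 - b) (fun a b => a) (fun _ _ => rfl) fun a b => ?_
    dsimp
    linear_combination 2 * two_mul_triangular (2 * (-1 - b) + a + 2) +
      2 * two_mul_triangular ((-1 - b) - 2 * a) -
      10 * two_mul_triangular a - 10 * two_mul_triangular b
  · refine tsum_zpow_eq_of_equiv
      ((Equiv.prodComm ℤ ℤ).trans ((Equiv.subRight 1).prodCongr (Equiv.subLeft (-1))))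
      (fun a b => b - 1) (fun a b => -1 - a) (fun _ _ => rfl) fun a b => ?_
    dsimp
    linear_combination 2 * two_mul_triangular (2 * (b - 1) + (-1 - a) + 3) +
      2 * two_mul_triangular ((b - 1) - 2 * (-1 - a)) -
      10 * two_mul_triangular a - 10 * two_mul_triangular b
  · refine tsum_zpow_eq_of_equiv ((Equiv.subLeft (-2)).prodCongr (Equiv.subLeft (-1)))
      (fun a b => -2 - a) (fun a b => -1 - b) (fun _ _ => rfl) fun a b => ?_
    dsimp
    linear_combination 2 * two_mul_triangular (2 * (-2 - a) + (-1 - b) + 4) +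
      2 * two_mul_triangular ((-2 - a) - 2 * (-1 - b)) -
      10 * two_mul_triangular a - 10 * two_mul_triangular b

/-- The quintic dissection of `ψ(r)²`. -/
theorem thetaSum_sq_eq_mul_add (hr : 0 < r) (hlt : r < 1) :
    thetaSum (r ^ 1) (r ^ 1) * thetaSum (r ^ 1) (r ^ 1) =
      r * (thetaSum (r ^ 5) (r ^ 5) * thetaSum (r ^ 5) (r ^ 5)) +
        4 * (thetaSum (r ^ 5) (r ^ 4) * thetaSum (r ^ 5) (r ^ 2)) := by
  have hpos {m : ℕ} : 0 < r ^ m := pow_pos hr m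
  have hone {m : ℕ} (hm : m ≠ 0) : r ^ m < 1 := pow_lt_one₀ hr.le hlt hm
  have hbase : r * (thetaSum (r ^ 5) (r ^ 5) * thetaSum (r ^ 5) (r ^ 5)) =
      ∑' z : ℤ × ℤ, r ^ (((5 : ℕ) : ℤ) * (z.1 * (z.1 - 1) / 2 + z.2 * (z.2 - 1) / 2) +
        ((5 : ℕ) : ℤ) * z.1 + ((5 : ℕ) : ℤ) * z.2 + 1) := by
    rw [thetaSum_mul_thetaSum 5 5 5 hr.ne' hpos (hone (by decide)), ← tsum_mul_left]
    exact tsum_congr fun z => by rw [zpow_add_one₀ hr.ne', mul_comm]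
  rw [thetaSum_mul_thetaSum 1 1 1 hr.ne' hpos (hone (by decide)), hbase,
    thetaSum_mul_thetaSum 5 4 2 hr.ne' hpos (hone (by decide)),
    tsum_int_prod_eq_sum_classes _ (summable_thetaSum_mul 1 1 1 hr.ne' hpos (hone (by decide)))]
  simp only [Fin.sum_univ_five]
  have hadd {a b c d e Z S : ℝ} (ha : a = S) (hb : b = S) (hc : c = S) (hd : d = Z) (he : e = S) :
      a + b + c + d + e = Z + 4 * S := by
    rw [ha, hb, hc, hd, he]
    ring
  refine hadd ?_ ?_ ?_ ?_ ?_
  · refine tsum_zpow_eq_of_equiv (Equiv.refl _)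
      (fun a b => a) (fun a b => b) (fun _ _ => rfl) fun a b => ?_
    dsimp
    linear_combination 1 * two_mul_triangular (2 * a + b + 0) +
      1 * two_mul_triangular (a - 2 * b) -
      5 * two_mul_triangular a - 5 * two_mul_triangular b
  · refine tsum_zpow_eq_of_equiv ((Equiv.subLeft (-1)).prodCongr (Equiv.neg ℤ))
      (fun a b => -1 - a) (fun a b => -b) (fun _ _ => rfl) fun a b => ?_
    dsimp
    linear_combination 1 * two_mul_triangular (2 * (-1 - a) + (-b) + 1) +
      1 * two_mul_triangular ((-1 - a) - 2 * (-b)) -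
      5 * two_mul_triangular a - 5 * two_mul_triangular b
  · refine tsum_zpow_eq_of_equiv
      ((Equiv.prodComm ℤ ℤ).trans ((Equiv.subLeft (-1)).prodCongr (Equiv.refl ℤ)))
      (fun a b => -1 - b) (fun a b => a) (fun _ _ => rfl) fun a b => ?_
    dsimp
    linear_combination 1 * two_mul_triangular (2 * (-1 - b) + a + 2) +
      1 * two_mul_triangular ((-1 - b) - 2 * a) -
      5 * two_mul_triangular a - 5 * two_mul_triangular b
  · refine tsum_zpow_eq_of_equiv ((Equiv.subRight 1).prodCongr (Equiv.refl ℤ))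
      (fun a b => a - 1) (fun a b => b) (fun _ _ => rfl) fun a b => ?_
    dsimp
    linear_combination 1 * two_mul_triangular (2 * (a - 1) + b + 3) +
      1 * two_mul_triangular ((a - 1) - 2 * b) -
      5 * two_mul_triangular a - 5 * two_mul_triangular b
  · refine tsum_zpow_eq_of_equiv
      ((Equiv.prodComm ℤ ℤ).trans ((Equiv.subRight 2).prodCongr (Equiv.subLeft (-1))))
      (fun a b => b - 2) (fun a b => -1 - a) (fun _ _ => rfl) fun a b => ?_
    dsimp
    linear_combination 1 * two_mul_triangular (2 * (b - 2) + (-1 - a) + 4) +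
      1 * two_mul_triangular ((b - 2) - 2 * (-1 - a)) -
      5 * two_mul_triangular a - 5 * two_mul_triangular b

end lattice

section eulerFunction

variable {q : ℝ}

lemma fneg_eq_qPoch (hq0 : 0 < q) (hq1 : q < 1) : fneg q = qPoch q q := by
  have hsum : fneg q = thetaSum (q ^ 3) (-q) := by
    refine tsum_congr fun n => ?_
    have he : n * (3 * n - 1) / 2 = 3 * (n * (n - 1) / 2) + n := by
      have h := two_mul_triangular n
      have : n * (3 * n - 1) = 2 * (3 * (n * (n - 1) / 2) + n) := by
        linear_combination (-3) * h
      rw [this, Int.mul_ediv_cancel_left _ two_ne_zero]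
    rw [he, zpow_add₀ hq0.ne', zpow_mul, neg_eq_neg_one_mul q, mul_zpow]
    norm_cast
    ring
  rw [hsum, thetaSum_eq_qPoch (by positivity) (pow_lt_one₀ hq0.le hq1 (by decide))
      (neg_ne_zero.mpr hq0.ne'),
    qPoch_eq_prod_residues q hq0.le hq1 (m := 3) (by decide)]
  have h : -((-q)⁻¹ * q ^ 3) = q * q ^ 1 := by
    field_simp
  simp only [prod_range_succ, prod_range_zero, neg_neg, h, pow_zero, mul_one, one_mul]
  rw [show q * q ^ 2 = q ^ 3 by ring]
  ring

lemma fneg_pos (hq0 : 0 < q) (hq1 : q < 1) : 0 < fneg q := by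
  rw [fneg_eq_qPoch hq0 hq1]
  exact qPoch_pos hq0.le hq1 hq1

lemma qPoch_sq_mul_fneg (hq0 : 0 < q) (hq1 : q < 1) :
    qPoch q (q ^ 2) * fneg (q ^ 2) = fneg q := by
  rw [fneg_eq_qPoch hq0 hq1,
    fneg_eq_qPoch (by positivity) (pow_lt_one₀ hq0.le hq1 (by decide)),
    qPoch_eq_prod_residues q hq0.le hq1 (m := 2) (by decide)]
  simp only [prod_range_succ, prod_range_zero, pow_zero, mul_one, one_mul, pow_one]
  rw [← sq]

lemma qPoch_neg_mul_fneg (hq0 : 0 < q) (hq1 : q < 1) :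
    qPoch (-q) q * fneg q = fneg (q ^ 2) := by
  rw [fneg_eq_qPoch hq0 hq1,
    fneg_eq_qPoch (by positivity) (pow_lt_one₀ hq0.le hq1 (by decide)), mul_comm]
  exact qPoch_mul_qPoch_neg q hq0.le hq1

lemma thetaSum_sq_neg_mul (hq0 : 0 < q) (hq1 : q < 1) :
    thetaSum (q ^ 2) (-q) * fneg (q ^ 2) = fneg q ^ 2 := by
  have h2 : q ^ 2 < 1 := pow_lt_one₀ hq0.le hq1 (by decide)
  rw [thetaSum_eq_qPoch (by positivity) h2 (neg_ne_zero.mpr hq0.ne'),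
    ← qPoch_sq_mul_fneg hq0 hq1, fneg_eq_qPoch (by positivity) h2,
    show -((-q)⁻¹ * q ^ 2) = q by field_simp, neg_neg]
  ring

lemma thetaSum_self_mul (hq0 : 0 < q) (hq1 : q < 1) :
    thetaSum q q * fneg q = 2 * fneg (q ^ 2) ^ 2 := by
  have h1 : qPoch (-1) q = 2 * qPoch (-q) q := by
    have hm := multipliable_one_sub_mul_pow (-q) hq0.le hq1
    have hs (k : ℕ) : 1 - (-1 : ℝ) * q ^ (k + 1) = 1 - (-q) * q ^ k := by ring
    rw [qPoch, tprod_eq_zero_mul' (by simpa only [hs] using hm)]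
    simp only [hs]
    rw [← qPoch]
    norm_num
  rw [thetaSum_eq_qPoch hq0 hq1 hq0.ne', inv_mul_cancel₀ hq0.ne', h1,
    ← qPoch_neg_mul_fneg hq0 hq1, fneg_eq_qPoch hq0 hq1]
  ring

lemma thetaSum_ten_mul (hq0 : 0 < q) (hq1 : q < 1) :
    thetaSum (q ^ 10) (-q ^ 9) * thetaSum (q ^ 10) (-q ^ 7) * (fneg (q ^ 2) * fneg (q ^ 5)) =
      fneg q * fneg (q ^ 10) ^ 3 := by
  have h (n : ℕ) (hn : n ≠ 0) : q ^ n < 1 := pow_lt_one₀ hq0.le hq1 hn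
  have hodd := qPoch_eq_prod_residues q (sq_nonneg q) (h 2 (by decide)) (m := 5) (by decide)
  have h1 := qPoch_sq_mul_fneg hq0 hq1
  have h5 := qPoch_sq_mul_fneg (pow_pos hq0 5) (h 5 (by decide))
  simp only [prod_range_succ, prod_range_zero, one_mul, ← pow_mul, ← pow_succ'] at hodd h5
  norm_num at hodd h5
  rw [thetaSum_eq_qPoch (by positivity) (h 10 (by decide)) (by simpa using hq0.ne'),
    thetaSum_eq_qPoch (by positivity) (h 10 (by decide)) (by simpa using hq0.ne'),
    ← fneg_eq_qPoch (by positivity) (h 10 (by decide)),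
    show -((-q ^ 9)⁻¹ * q ^ 10) = q by field_simp,
    show -((-q ^ 7)⁻¹ * q ^ 10) = q ^ 3 by field_simp, neg_neg, neg_neg, ← h1, ← h5, hodd]
  ring

lemma thetaSum_five_mul (hq0 : 0 < q) (hq1 : q < 1) :
    thetaSum (q ^ 5) (q ^ 4) * thetaSum (q ^ 5) (q ^ 2) * (fneg q * fneg (q ^ 10)) =
      fneg (q ^ 2) * fneg (q ^ 5) ^ 3 := by
  have h (n : ℕ) (hn : n ≠ 0) : q ^ n < 1 := pow_lt_one₀ hq0.le hq1 hn
  have hres := qPoch_eq_prod_residues (-q) hq0.le hq1 (m := 5) (by decide)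
  have h1 := qPoch_neg_mul_fneg hq0 hq1
  have h5 := qPoch_neg_mul_fneg (pow_pos hq0 5) (h 5 (by decide))
  simp only [prod_range_succ, prod_range_zero, one_mul, neg_mul, ← pow_mul,
    ← pow_succ'] at hres h5
  norm_num at hres h5
  rw [thetaSum_eq_qPoch (by positivity) (h 5 (by decide)) (by positivity),
    thetaSum_eq_qPoch (by positivity) (h 5 (by decide)) (by positivity),
    ← fneg_eq_qPoch (by positivity) (h 5 (by decide)),
    show -((q ^ 4)⁻¹ * q ^ 5) = -q by field_simp,
    show -((q ^ 2)⁻¹ * q ^ 5) = -q ^ 3 by field_simp, ← h1, ← h5, hres]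
  ring

/-- The level ten eta-quotient identity coming from `φ(-q)² - φ(-q⁵)²`. -/
theorem fneg_phi_identity (hq0 : 0 < q) (hq1 : q < 1) :
    fneg (q ^ 2) * fneg (q ^ 5) ^ 5 * fneg (q ^ 2) =
      fneg q ^ 4 * fneg (q ^ 5) * fneg (q ^ 10) ^ 2 +
        4 * q * (fneg q * fneg (q ^ 2) * fneg (q ^ 10) ^ 5) := by
  have h (n : ℕ) (hn : n ≠ 0) : q ^ n < 1 := pow_lt_one₀ hq0.le hq1 hn
  have hid := thetaSum_sq_eq_add_four_mul (r := -q) (neg_ne_zero.mpr hq0.ne')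
    (by rwa [abs_neg, abs_of_pos hq0])
  have h1 := thetaSum_sq_neg_mul hq0 hq1
  have h5 := thetaSum_sq_neg_mul (pow_pos hq0 5) (h 5 (by decide))
  have h10 := thetaSum_ten_mul hq0 hq1
  rw [← pow_mul] at h5
  norm_num at h5
  rw [Even.neg_pow (by decide : Even 2), Even.neg_pow (by decide : Even 10), pow_one,
    Odd.neg_pow (by decide : Odd 5), Odd.neg_pow (by decide : Odd 7),
    Odd.neg_pow (by decide : Odd 9)] at hid
  generalize thetaSum (q ^ 2) (-q) = a at *
  generalize thetaSum (q ^ 10) (-q ^ 5) = b at *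
  generalize thetaSum (q ^ 10) (-q ^ 9) * thetaSum (q ^ 10) (-q ^ 7) = c at *
  linear_combination
    (-(fneg (q ^ 2) ^ 2 * fneg (q ^ 5)) * (b * fneg (q ^ 10) + fneg (q ^ 5) ^ 2)) * h5
      + fneg (q ^ 5) * fneg (q ^ 10) ^ 2 * (a * fneg (q ^ 2) + fneg q ^ 2) * h1
      + 4 * q * fneg (q ^ 2) * fneg (q ^ 10) ^ 2 * h10
      - fneg (q ^ 2) ^ 2 * fneg (q ^ 5) * fneg (q ^ 10) ^ 2 * hid

theorem fneg_psi_identity (hq0 : 0 < q) (hq1 : q < 1) :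
    fneg (q ^ 2) ^ 4 * fneg (q ^ 5) ^ 2 * fneg (q ^ 10) =
      fneg q * fneg (q ^ 2) * fneg (q ^ 5) ^ 5 +
        q * (fneg q ^ 2 * fneg (q ^ 10) ^ 5) := by
  have h (n : ℕ) (hn : n ≠ 0) : q ^ n < 1 := pow_lt_one₀ hq0.le hq1 hn
  have hid := thetaSum_sq_eq_mul_add hq0 hq1
  have h1 := thetaSum_self_mul hq0 hq1
  have h5 := thetaSum_self_mul (pow_pos hq0 5) (h 5 (by decide))
  have h10 := thetaSum_five_mul hq0 hq1
  rw [← pow_mul] at h5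
  norm_num at h5
  rw [pow_one] at hid
  generalize thetaSum q q = a at *
  generalize thetaSum (q ^ 5) (q ^ 5) = b at *
  generalize thetaSum (q ^ 5) (q ^ 4) * thetaSum (q ^ 5) (q ^ 2) = c at *
  linear_combination
    (-(fneg (q ^ 5) ^ 2 * fneg (q ^ 10) / 4)) * (a * fneg q + 2 * fneg (q ^ 2) ^ 2) * h1
      + fneg q * fneg (q ^ 5) ^ 2 * h10
      + q * fneg q ^ 2 * fneg (q ^ 10) / 4 * (b * fneg (q ^ 5) + 2 * fneg (q ^ 10) ^ 2) * h5
      + fneg q ^ 2 * fneg (q ^ 5) ^ 2 * fneg (q ^ 10) / 4 * hid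

end eulerFunction

section levelTen

variable {q : ℝ}

/-- The Hauptmodul `f(-q)³ f(-q⁵) / (q f(-q²) f(-q¹⁰)³)` of level ten. -/
noncomputable def levelTenParam (q : ℝ) : ℝ :=
  fneg q ^ 3 * fneg (q ^ 5) / (q * fneg (q ^ 2) * fneg (q ^ 10) ^ 3)

lemma levelTenParam_pos (hq0 : 0 < q) (hq1 : q < 1) : 0 < levelTenParam q := by
  have h (n : ℕ) (hn : n ≠ 0) : 0 < fneg (q ^ n) :=
    fneg_pos (pow_pos hq0 n) (pow_lt_one₀ hq0.le hq1 hn)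
  have h1 := fneg_pos hq0 hq1
  have h2 := h 2 (by decide)
  have h5 := h 5 (by decide)
  have h10 := h 10 (by decide)
  unfold levelTenParam
  positivity

/-- Three eta quotients of level ten as rational functions of the Hauptmodul. -/
lemma eta_quotients_eq_levelTenParam (hq0 : 0 < q) (hq1 : q < 1) :
    (fneg q * fneg (q ^ 2) / (fneg (q ^ 5) * fneg (q ^ 10))) ^ 2 / q =
        levelTenParam q * (levelTenParam q + 5) / (levelTenParam q + 4) ∧
      (fneg (q ^ 2) / fneg (q ^ 10)) ^ 6 / q ^ 2 =
        levelTenParam q * (levelTenParam q + 5) ^ 2 / (levelTenParam q + 4) ∧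
      (fneg q / fneg (q ^ 5)) ^ 6 / q =
        levelTenParam q ^ 2 * (levelTenParam q + 5) / (levelTenParam q + 4) ^ 2 := by
  have h (n : ℕ) (hn : n ≠ 0) : 0 < fneg (q ^ n) :=
    fneg_pos (pow_pos hq0 n) (pow_lt_one₀ hq0.le hq1 hn)
  have h1 := fneg_pos hq0 hq1
  have h2 := h 2 (by decide)
  have h5 := h 5 (by decide)
  have h10 := h 10 (by decide)
  have hphi := fneg_phi_identity hq0 hq1
  have hpsi := fneg_psi_identity hq0 hq1
  have ht : levelTenParam q =
    fneg q ^ 3 * fneg (q ^ 5) / (q * fneg (q ^ 2) * fneg (q ^ 10) ^ 3) := rfl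
  generalize fneg q = a at *
  generalize fneg (q ^ 2) = b at *
  generalize fneg (q ^ 5) = c at *
  generalize fneg (q ^ 10) = d at *
  have ht4 : levelTenParam q + 4 = b * c ^ 5 / (q * a * d ^ 5) := by
    rw [ht]
    field_simp
    linear_combination -hphi
  have ht5 : levelTenParam q + 5 = b ^ 4 * c ^ 2 / (q * a ^ 2 * d ^ 4) := by
    have h5' : levelTenParam q + 5 = b * c ^ 5 / (q * a * d ^ 5) + 1 := by rw [← ht4]; ring
    rw [h5']
    field_simp
    linear_combination -hpsi
  rw [ht4, ht5, ht]
  refine ⟨?_, ?_, ?_⟩ <;> field_simp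

/-- The relation between the level ten Hauptmoduln at `q` and at `q²`. -/
lemma levelTenParam_sq_relation (hq0 : 0 < q) (hq1 : q < 1) :
    (levelTenParam (q ^ 2) + 4) * levelTenParam q ^ 2 +
      (6 * levelTenParam (q ^ 2) + 20) * levelTenParam q - levelTenParam (q ^ 2) ^ 2 = 0 := by
  have hq2 : q ^ 2 < 1 := pow_lt_one₀ hq0.le hq1 (by decide)
  have ht := levelTenParam_pos hq0 hq1
  have hs := levelTenParam_pos (pow_pos hq0 2) hq2
  have h1 := (eta_quotients_eq_levelTenParam hq0 hq1).2.1
  have h2 := (eta_quotients_eq_levelTenParam (pow_pos hq0 2) hq2).2.2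
  rw [← pow_mul q 2 5, h1] at h2
  generalize levelTenParam q = t at *
  generalize levelTenParam (q ^ 2) = s at *
  rw [div_eq_div_iff (by positivity) (by positivity)] at h2
  have h0 : s * t + 4 * s + 4 * t + 20 ≠ 0 := by positivity
  refine (mul_eq_zero.mp ?_).resolve_left h0
  linear_combination h2

end levelTen

lemma quadratic_of_lower_relation {t s : ℝ} (ht : 0 < t)
    (h : (s + 4) * t ^ 2 + (6 * s + 20) * t - s ^ 2 = 0) :
    (s + 4) ^ 3 * (t * (t + 5) / (t + 4)) ^ 2 +
      4 * s * (s + 4) * (s + 5) * (t * (t + 5) / (t + 4)) - s ^ 3 * (s + 5) = 0 := by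
  field_simp
  linear_combination ((s + 4) ^ 2 * t ^ 2 + 8 * (s + 5) * (s + 2) * t + 16 * s * (s + 5)) * h

lemma quadratic_of_upper_relation {s u : ℝ} (hu : 0 < u)
    (h : (u + 4) * s ^ 2 + (6 * u + 20) * s - u ^ 2 = 0) :
    (s + 4) * (u * (u + 5) / (u + 4)) ^ 2 - s * (s + 4) * (s + 5) * (u * (u + 5) / (u + 4)) -
      s * (s + 5) ^ 3 = 0 := by
  field_simp
  linear_combination (-((s + 4) * u ^ 2 + (s + 4) * (s + 10) * u + 4 * (s + 5) ^ 2)) * h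

/-- Reduction of the powers of a root of a monic quadratic. -/
lemma pow_eq_linear_of_sq_eq {R : Type*} [CommRing R] {z a b : R} (h : z ^ 2 = a * z + b) :
    z ^ 3 = (a ^ 2 + b) * z + a * b ∧
      z ^ 4 = (a ^ 3 + 2 * a * b) * z + (a ^ 2 + b) * b ∧
      z ^ 5 = (a ^ 4 + 3 * a ^ 2 * b + b ^ 2) * z + (a ^ 3 + 2 * a * b) * b ∧
      z ^ 6 = (a ^ 5 + 4 * a ^ 3 * b + 3 * a * b ^ 2) * z +
        (a ^ 4 + 3 * a ^ 2 * b + b ^ 2) * b ∧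
      z ^ 7 = (a ^ 6 + 5 * a ^ 4 * b + 6 * a ^ 2 * b ^ 2 + b ^ 3) * z +
        (a ^ 5 + 4 * a ^ 3 * b + 3 * a * b ^ 2) * b ∧
      z ^ 8 = (a ^ 7 + 6 * a ^ 5 * b + 10 * a ^ 3 * b ^ 2 + 4 * a * b ^ 3) * z +
        (a ^ 6 + 5 * a ^ 4 * b + 6 * a ^ 2 * b ^ 2 + b ^ 3) * b := by
  have step {n : ℕ} {c d : R} (hn : z ^ n = c * z + d) :
      z ^ (n + 1) = (a * c + d) * z + c * b := by
    rw [pow_succ, hn]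
    linear_combination c * h
  have h3 := step h
  have h4 := step h3
  have h5 := step h4
  have h6 := step h5
  have h7 := step h6
  have h8 := step h7
  refine ⟨?_, ?_, ?_, ?_, ?_, ?_⟩
  · linear_combination h3
  · linear_combination h4
  · linear_combination h5
  · linear_combination h6
  · linear_combination h7
  · linear_combination h8

set_option maxHeartbeats 1000000 in
/-- The level forty relation between two squared eta quotients, eliminated from two quadratics. -/
lemma modular_relation_of_quadratics {s X Y : ℝ} (hs : 0 < s)
    (hX : (s + 4) ^ 3 * X ^ 2 + 4 * s * (s + 4) * (s + 5) * X - s ^ 3 * (s + 5) = 0)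
    (hY : (s + 4) * Y ^ 2 - s * (s + 4) * (s + 5) * Y - s * (s + 5) ^ 3 = 0) :
    Y ^ 8
      - X * (15625 * Y ^ 4 + 5000 * Y ^ 5 + 875 * Y ^ 6 + 52 * Y ^ 7)
      - X ^ 2 * (390625 * Y ^ 2 + 187500 * Y ^ 3 + 57500 * Y ^ 4 + 9600 * Y ^ 5 +
        1024 * Y ^ 6 + 35 * Y ^ 7)
      - X ^ 3 * (187500 * Y ^ 2 + 93125 * Y ^ 3 + 26900 * Y ^ 4 + 3987 * Y ^ 5 + 384 * Y ^ 6 +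
        8 * Y ^ 7)
      - X ^ 4 * (15625 * Y + 57500 * Y ^ 2 + 26900 * Y ^ 3 + 7676 * Y ^ 4 + 1076 * Y ^ 5 +
        92 * Y ^ 6 + Y ^ 7)
      - X ^ 5 * (5000 * Y + 9600 * Y ^ 2 + 3987 * Y ^ 3 + 1076 * Y ^ 4 + 149 * Y ^ 5 + 12 * Y ^ 6)
      - X ^ 6 * (875 * Y + 1024 * Y ^ 2 + 384 * Y ^ 3 + 92 * Y ^ 4 + 12 * Y ^ 5 + Y ^ 6)
      - X ^ 7 * (52 * Y + 35 * Y ^ 2 + 8 * Y ^ 3 + Y ^ 4)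
      + X ^ 8 = 0 := by
  obtain ⟨w, rfl⟩ : ∃ w, s = w - 4 := ⟨s + 4, by ring⟩
  have hw : 0 < w := by linarith
  obtain ⟨x, rfl⟩ : ∃ x, X = (w - 4) * x / w ^ 2 := ⟨X * w ^ 2 / (w - 4), by field_simp⟩
  obtain ⟨y, rfl⟩ : ∃ y, Y = (w + 1) * y / w := ⟨Y * w / (w + 1), by field_simp⟩
  have hx2 : x ^ 2 = -4 * (w + 1) * x + (w - 4) * w * (w + 1) := by
    have h : (w - 4) ^ 2 / w * (x ^ 2 - (-4 * (w + 1) * x + (w - 4) * w * (w + 1))) = 0 := by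
      rw [← hX]
      field_simp
      ring
    have h0 : (w - 4) ^ 2 / w ≠ 0 := by positivity
    exact sub_eq_zero.mp ((mul_eq_zero.mp h).resolve_left h0)
  have hy2 : y ^ 2 = (w - 4) * w * y + (w - 4) * w * (w + 1) := by
    have h : (w + 1) ^ 2 / w *
        (y ^ 2 - ((w - 4) * w * y + (w - 4) * w * (w + 1))) = 0 := by
      rw [← hY]
      field_simp
      ring
    have h0 : (w + 1) ^ 2 / w ≠ 0 := by positivity
    exact sub_eq_zero.mp ((mul_eq_zero.mp h).resolve_left h0)
  obtain ⟨hx3, hx4, hx5, hx6, hx7, hx8⟩ := pow_eq_linear_of_sq_eq hx2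
  obtain ⟨hy3, hy4, hy5, hy6, hy7, hy8⟩ := pow_eq_linear_of_sq_eq hy2
  simp only [div_pow, mul_pow, hx2, hx3, hx4, hx5, hx6, hx7, hx8, hy2, hy3, hy4, hy5, hy6, hy7,
    hy8]
  field_simp
  ring
theorem stmt_6 (q A B₄ P Q : ℝ) (hq0 : 0 < q) (hq1 : q < 1)
    (hA : A = fneg q * fneg (q ^ 2) /
      (q ^ ((1 : ℝ) / 2) * fneg (q ^ 5) * fneg (q ^ 10)))
    (hB : B₄ = fneg (q ^ 4) * fneg (q ^ 8) /
      (q ^ 2 * fneg (q ^ 20) * fneg (q ^ 40)))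
    (hP : P = A * B₄) (hQ : Q = A / B₄) :
    (Q ^ 8 + 1 / Q ^ 8) - 52 * (Q ^ 6 + 1 / Q ^ 6) - 1024 * (Q ^ 4 + 1 / Q ^ 4)
      - 3987 * (Q ^ 2 + 1 / Q ^ 2)
      - (P + 5 ^ 2 / P) * (1076 * (Q + 1 / Q) + 384 * (Q ^ 3 + 1 / Q ^ 3)
          + 35 * (Q ^ 5 + 1 / Q ^ 5))
      - (P ^ 2 + 5 ^ 4 / P ^ 2) * (92 * (Q ^ 2 + 1 / Q ^ 2)
          + 8 * (Q ^ 4 + 1 / Q ^ 4) + 149)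
      - (P ^ 3 + 5 ^ 6 / P ^ 3) * (12 * (Q + 1 / Q) + (Q ^ 3 + 1 / Q ^ 3))
      - (P ^ 4 + 5 ^ 8 / P ^ 4) - 7676 = 0 := by
  have hpos (n : ℕ) (hn : n ≠ 0) : 0 < fneg (q ^ n) :=
    fneg_pos (pow_pos hq0 n) (pow_lt_one₀ hq0.le hq1 hn)
  have hq2 : q ^ 2 < 1 := pow_lt_one₀ hq0.le hq1 (by decide)
  have hq4 : q ^ 4 < 1 := pow_lt_one₀ hq0.le hq1 (by decide)
  have hA0 : 0 < A := by
    have := fneg_pos hq0 hq1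
    have := hpos 2 (by decide)
    have := hpos 5 (by decide)
    have := hpos 10 (by decide)
    rw [hA]
    positivity
  have hB0 : 0 < B₄ := by
    have := hpos 4 (by decide)
    have := hpos 8 (by decide)
    have := hpos 20 (by decide)
    have := hpos 40 (by decide)
    rw [hB]
    positivity
  have hroot : (q ^ ((1 : ℝ) / 2)) ^ 2 = q := by
    rw [← Real.rpow_natCast, ← Real.rpow_mul hq0.le]
    norm_num
  have hA2 := (eta_quotients_eq_levelTenParam hq0 hq1).1
  have hB2 := (eta_quotients_eq_levelTenParam (pow_pos hq0 4) hq4).1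
  have hX : A ^ 2 = levelTenParam q * (levelTenParam q + 5) / (levelTenParam q + 4) := by
    rw [← hA2, hA, mul_assoc, mul_comm (q ^ ((1 : ℝ) / 2)), ← div_div, div_pow, hroot]
  have hY : B₄ ^ 2 = levelTenParam (q ^ 4) * (levelTenParam (q ^ 4) + 5) /
      (levelTenParam (q ^ 4) + 4) := by
    rw [← pow_mul q 4 2, ← pow_mul q 4 5, ← pow_mul q 4 10] at hB2
    rw [← hB2, hB]
    field_simp
  have hts := levelTenParam_sq_relation hq0 hq1
  have hsu := levelTenParam_sq_relation (pow_pos hq0 2) hq2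
  rw [← pow_mul q 2 2] at hsu
  have hrel := modular_relation_of_quadratics (levelTenParam_pos (pow_pos hq0 2) hq2)
    (quadratic_of_lower_relation (levelTenParam_pos hq0 hq1) hts)
    (quadratic_of_upper_relation (levelTenParam_pos (pow_pos hq0 4) hq4) hsu)
  rw [← hX, ← hY] at hrel
  rw [← zero_div ((A ^ 2 * B₄ ^ 2) ^ 4), ← hrel, hP, hQ]
  field_simp
  ring
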